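/- Let A be a *-continuous action lattice and Q a set of analytic quasiequations such that A satisfies every quasiequation in Q. Let W_A := (A, A, ≤, ·, 1) be the associated residuated frame. Then the dual algebra (W_A)⁺ is a *-continuous action lattice satisfying every quasiequation in Q, and the map f : A → (W_A)⁺, f(a) := a^◁ = {b ∈ A | b ≤ a}, is an injective homomorphism preserving ∧, ∨, ·, \, /, *, 0 and 1. Consequently, every class of *-continuous action lattices axiomatized relative to the class of all *-continuous action lattices by analytic quasiequations is closed under MacNeille completions. -/

import Mathlib

/-!
The argument separates what holds in every residuated frame from what is special to `W_A`.

Frame part. For a closed set `Z` one has `gam N X ⊆ Z ↔ X ⊆ Z`, and if `N` is nuclear the residuals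
`sld X Z`, `srd Z X` of a closed set are again closed (`closed_sld`, `closed_srd`). Hence an inclusion
into a closed set may be tested on generators, one factor of a `∘_γ`-product at a time
(`cmul_subset_iff`, `gam_subset_srd`): this gives the residuated lattice laws, the star laws and
`*`-continuity of the dual algebra, the latter two by induction over the submonoid generated by `X`.

Quasiequations. A `∘_γ`-product of closed sets lies below `Z` as soon as every product of a choice
of elements does (`listCmul_subset`). The left-hand side of the conclusion of an analytic
quasiequation is a product of distinct variables, so such a choice is a valuation `x` into `A`. The
premises for sets then give the premises for `x` with every `z ∈ Z^▷` on the right, and the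
quasiequation in `A` finishes the proof.

Embedding. Since `N` is `≤`, the set `a^◁` is the principal ideal of `a`, and `γ(X) = a^◁`
whenever `a` is the supremum of `X` (`polL_eq_gam`). Residuation makes `·` preserve the relevant
suprema, and `*`-continuity of `A` says that `a*` is the supremum of the submonoid generated
by `a^◁`.
-/

/-! MacNeille completions: the dual algebra of W_A is a *-continuous action lattice into which A embeds, preserving analytic quasiequations. -/

namespace ResFrames

variable {W W' A : Type*}

def polR (N : W → W' → Prop) (X : Set W) : Set W' := {z | ∀ x ∈ X, N x z}
def polL (N : W → W' → Prop) (Y : Set W') : Set W := {x | ∀ z ∈ Y, N x z}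
def gam (N : W → W' → Prop) (X : Set W) : Set W := polL N (polR N X)
def Closed (N : W → W' → Prop) (X : Set W) : Prop := gam N X = X

structure IsResFrame [Monoid W] (N : W → W' → Prop)
    (lres : W → W' → W') (rres : W' → W → W') : Prop where
  nuclear_l : ∀ (x y : W) (z : W'), N (x * y) z ↔ N y (lres x z)
  nuclear_r : ∀ (x y : W) (z : W'), N (x * y) z ↔ N x (rres z y)

/-- `X ∘_γ Y  = γ({x∘y | x ∈ X, y ∈ Y})`. -/
def cmul [Monoid W] (N : W → W' → Prop) (X Y : Set W) : Set W :=
  gam N (Set.image2 (· * ·) X Y)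

/-- `X ∪_γ Y = γ(X ∪ Y)`. -/
def cjoin (N : W → W' → Prop) (X Y : Set W) : Set W := gam N (X ∪ Y)

/-- `X \ Y = {w | ∀ x ∈ X, x∘w ∈ Y}`. -/
def sld [Monoid W] (X Y : Set W) : Set W := {w | ∀ x ∈ X, x * w ∈ Y}

/-- `Y / X = {w | ∀ x ∈ X, w∘x ∈ Y}`. -/
def srd [Monoid W] (Y X : Set W) : Set W := {w | ∀ x ∈ X, w * x ∈ Y}

/-- The unit `γ({ε})` of the dual algebra. -/
def cone [Monoid W] (N : W → W' → Prop) : Set W := gam N {1}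

/-- `X*`: the set of all finite products of elements of `X`. -/
def starSet [Monoid W] (X : Set W) : Set W := (Submonoid.closure X : Set W)

/-- `X^{*γ} = γ(X*)`. -/
def cstar [Monoid W] (N : W → W' → Prop) (X : Set W) : Set W := gam N (starSet X)

/-- `Xⁿ`: the `n`-fold power of `X` with respect to `∘_γ`, with `X⁰ = γ({ε})`. -/
def gpow [Monoid W] (N : W → W' → Prop) (X : Set W) : ℕ → Set W
  | 0 => cone N
  | n + 1 => cmul N (gpow N X n) X

/-- The dual algebra `(W⁺, ∩, ∪_γ, ∘_γ, \, /, γ({ε}))` is a residuated lattice: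
all operations map closed sets to closed sets, `∩`/`∪_γ` are binary meet/join
with respect to `⊆`, `∘_γ` is a monoid operation with unit `γ({ε})`, and
`\`, `/` are its residuals. -/
def DualResLat [Monoid W] (N : W → W' → Prop) : Prop :=
  (∀ X Y : Set W, Closed N X → Closed N Y → Closed N (X ∩ Y)) ∧
  (∀ X Y : Set W, Closed N (cjoin N X Y)) ∧
  (∀ X Y : Set W, Closed N (cmul N X Y)) ∧
  (∀ X Y : Set W, Closed N Y → Closed N (sld X Y)) ∧
  (∀ X Y : Set W, Closed N Y → Closed N (srd Y X)) ∧
  Closed N (cone N) ∧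
  (∀ X Y : Set W, X ∩ Y ⊆ X) ∧
  (∀ X Y : Set W, X ∩ Y ⊆ Y) ∧
  (∀ X Y Z : Set W, Z ⊆ X → Z ⊆ Y → Z ⊆ X ∩ Y) ∧
  (∀ X Y : Set W, X ⊆ cjoin N X Y) ∧
  (∀ X Y : Set W, Y ⊆ cjoin N X Y) ∧
  (∀ X Y Z : Set W, Closed N Z → X ⊆ Z → Y ⊆ Z → cjoin N X Y ⊆ Z) ∧
  (∀ X Y Z : Set W, Closed N X → Closed N Y → Closed N Z →
    cmul N (cmul N X Y) Z = cmul N X (cmul N Y Z)) ∧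
  (∀ X : Set W, Closed N X → cmul N (cone N) X = X) ∧
  (∀ X : Set W, Closed N X → cmul N X (cone N) = X) ∧
  (∀ X Y Z : Set W, Closed N X → Closed N Y → Closed N Z →
    (cmul N X Y ⊆ Z ↔ Y ⊆ sld X Z)) ∧
  (∀ X Y Z : Set W, Closed N X → Closed N Y → Closed N Z →
    (cmul N X Y ⊆ Z ↔ X ⊆ srd Z Y))

variable [Monoid W]

/-- The product of a list of elements of the dual algebra with respect to
`∘_γ` (empty product `= γ({ε})`). -/
def listCmul (N : W → W' → Prop) : List (Set W) → Set W
  | [] => cone N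
  | X :: l => cmul N X (listCmul N l)

/-- The dual algebra `W⁺` satisfies the analytic quasiequation with `m`
variables and premises `prems` (each premise a list over `Fin m` encoding a
product of variables): under all valuations into `W⁺`, products interpreted
by `∘_γ` and `≤` by `⊆`. -/
def DualSatAQ (N : W → W' → Prop) (m : ℕ) (prems : List (List (Fin m))) : Prop :=
  ∀ (v : Fin m → Set W), (∀ j, Closed N (v j)) → ∀ Z : Set W, Closed N Z →
    (∀ p ∈ prems, listCmul N (p.map v) ⊆ Z) →
    listCmul N ((List.finRange m).map v) ⊆ Z

end ResFrames

/-- A residuated lattice `(A, ⊓, ⊔, *, \, /, 1)`: a lattice and a monoid such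
that `x * y ≤ z ↔ y ≤ x \ z ↔ x ≤ z / y`. Here `ld x z` is `x \ z` and
`rd z y` is `z / y`. -/
class ResiduatedLattice (A : Type*) extends Lattice A, Monoid A where
  ld : A → A → A
  rd : A → A → A
  resl : ∀ x y z : A, x * y ≤ z ↔ y ≤ ld x z
  resr : ∀ x y z : A, x * y ≤ z ↔ x ≤ rd z y

/-- An action lattice: a residuated lattice with a least element `azero` and
a Kleene star `astar` satisfying `1 ⊔ x * x* ≤ x*`, `x * y ≤ y → x* * y ≤ y`
and `y * x ≤ y → y * x* ≤ y`. -/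
class ActionLattice (A : Type*) extends ResiduatedLattice A where
  azero : A
  astar : A → A
  zero_le : ∀ x : A, azero ≤ x
  star_unfold : ∀ x : A, 1 ⊔ x * astar x ≤ astar x
  star_indl : ∀ x y : A, x * y ≤ y → astar x * y ≤ y
  star_indr : ∀ x y : A, y * x ≤ y → y * astar x ≤ y

/-- `*`-continuity: `a*` is the supremum of `{aⁿ | n ∈ ℕ}` for every `a`. -/
def StarContinuous (A : Type*) [ActionLattice A] : Prop :=
  ∀ a : A, IsLUB (Set.range fun n : ℕ => a ^ n) (ActionLattice.astar a)

open ResFrames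

/-- The algebra `A` satisfies the analytic quasiequation with `m` variables
and premises `prems` under all valuations into `A`. -/
def AlgSatAQ (A : Type*) [ResiduatedLattice A]
    (m : ℕ) (prems : List (List (Fin m))) : Prop :=
  ∀ (x : Fin m → A) (y : A),
    (∀ p ∈ prems, (p.map x).prod ≤ y) → ((List.finRange m).map x).prod ≤ y

/-- An analytic quasiequation: a number `m` of variables together with a list
of premises, each a list over `Fin m` encoding a product of variables. -/
abbrev AnQE : Type := (m : ℕ) × List (List (Fin m))

namespace ResFrames

/-! ### Closed sets -/

section Basic

variable {W W' : Type*} {N : W → W' → Prop}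

lemma subset_gam (X : Set W) : X ⊆ gam N X := fun _ hx _ hz => hz _ hx

lemma closed_polL (Y : Set W') : Closed N (polL N Y) :=
  Set.Subset.antisymm (fun _ hx z hz => hx z fun _ hw => hw z hz) (subset_gam _)

lemma closed_gam (X : Set W) : Closed N (gam N X) := closed_polL _

/-- Inclusion into a closed set can be tested before closing. -/
lemma gam_subset_iff {X Z : Set W} (hZ : Closed N Z) : gam N X ⊆ Z ↔ X ⊆ Z := by
  refine ⟨(subset_gam X).trans, fun h => ?_⟩
  rw [← hZ]
  exact fun x hx z hz => hx z fun w hw => hz w (h hw)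

lemma mem_closed_iff {X : Set W} (hX : Closed N X) {x : W} :
    x ∈ X ↔ ∀ z ∈ polR N X, N x z := by
  conv_lhs => rw [← hX]
  rfl

lemma closed_inter {X Y : Set W} (hX : Closed N X) (hY : Closed N Y) : Closed N (X ∩ Y) :=
  Set.Subset.antisymm (Set.subset_inter ((gam_subset_iff hX).2 Set.inter_subset_left)
    ((gam_subset_iff hY).2 Set.inter_subset_right)) (subset_gam _)

end Basic

/-! ### The dual algebra of a residuated frame -/

section Frame

variable {W W' : Type*} [Monoid W] {N : W → W' → Prop}

lemma cmul_subset_iff {X Y Z : Set W} (hZ : Closed N Z) :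
    cmul N X Y ⊆ Z ↔ ∀ x ∈ X, ∀ y ∈ Y, x * y ∈ Z := by
  rw [cmul, gam_subset_iff hZ, Set.image2_subset_iff]

lemma mul_mem_cmul {X Y : Set W} {x y : W} (hx : x ∈ X) (hy : y ∈ Y) : x * y ∈ cmul N X Y :=
  subset_gam _ (Set.mem_image2_of_mem hx hy)

lemma cmul_subset_iff_sld {X Y Z : Set W} (hZ : Closed N Z) :
    cmul N X Y ⊆ Z ↔ Y ⊆ sld X Z := by
  rw [cmul_subset_iff hZ]
  exact ⟨fun h y hy x hx => h x hx y hy, fun h x hx y hy => h hy x hx⟩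

lemma cmul_subset_iff_srd {X Y Z : Set W} (hZ : Closed N Z) :
    cmul N X Y ⊆ Z ↔ X ⊆ srd Z Y := by
  rw [cmul_subset_iff hZ]
  rfl

lemma one_mem_cone : (1 : W) ∈ cone N := subset_gam _ rfl

lemma subset_starSet (X : Set W) : X ⊆ starSet X := Submonoid.subset_closure

lemma one_mem_cstar (X : Set W) : (1 : W) ∈ cstar N X :=
  subset_gam _ (one_mem (Submonoid.closure X))

variable {lres : W → W' → W'} {rres : W' → W → W'}

lemma closed_sld (h : IsResFrame N lres rres) (X : Set W) {Y : Set W} (hY : Closed N Y) :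
    Closed N (sld X Y) := by
  -- `X \ Y` is the polar of the set of all `x \ z` with `x ∈ X` and `z ∈ Y^▷`.
  have key : sld X Y = polL N (Set.image2 lres X (polR N Y)) := by
    ext w
    simp only [sld, Set.mem_ofPred_eq, polL, Set.forall_mem_image2, ← h.nuclear_l]
    exact forall₂_congr fun x _ => mem_closed_iff hY
  rw [key]
  exact closed_polL _

lemma closed_srd (h : IsResFrame N lres rres) (X : Set W) {Y : Set W} (hY : Closed N Y) :
    Closed N (srd Y X) := by
  have key : srd Y X = polL N (Set.image2 (fun x z => rres z x) X (polR N Y)) := by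
    ext w
    simp only [srd, Set.mem_ofPred_eq, polL, Set.forall_mem_image2, ← h.nuclear_r]
    exact forall₂_congr fun x _ => mem_closed_iff hY
  rw [key]
  exact closed_polL _

lemma gam_subset_sld (h : IsResFrame N lres rres) {X Y Z : Set W} (hZ : Closed N Z) :
    gam N Y ⊆ sld X Z ↔ Y ⊆ sld X Z := gam_subset_iff (closed_sld h X hZ)

lemma gam_subset_srd (h : IsResFrame N lres rres) {X Y Z : Set W} (hZ : Closed N Z) :
    gam N X ⊆ srd Z Y ↔ X ⊆ srd Z Y := gam_subset_iff (closed_srd h Y hZ)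

/-- The closure of one factor is irrelevant for a product, on the left. -/
lemma cmul_gam_left (h : IsResFrame N lres rres) (X Y : Set W) :
    cmul N (gam N X) Y = cmul N X Y :=
  Set.Subset.antisymm
    ((cmul_subset_iff_srd (closed_gam _)).2 <| (gam_subset_srd h (closed_gam _)).2 <|
      (cmul_subset_iff_srd (closed_gam _)).1 Set.Subset.rfl)
    ((cmul_subset_iff (closed_gam _)).2 fun _ hx _ hy => mul_mem_cmul (subset_gam _ hx) hy)

/-- The closure of one factor is irrelevant for a product, on the right. -/
lemma cmul_gam_right (h : IsResFrame N lres rres) (X Y : Set W) :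
    cmul N X (gam N Y) = cmul N X Y :=
  Set.Subset.antisymm
    ((cmul_subset_iff_sld (closed_gam _)).2 <| (gam_subset_sld h (closed_gam _)).2 <|
      (cmul_subset_iff_sld (closed_gam _)).1 Set.Subset.rfl)
    ((cmul_subset_iff (closed_gam _)).2 fun _ hx _ hy => mul_mem_cmul hx (subset_gam _ hy))

lemma cmul_assoc (h : IsResFrame N lres rres) (X Y Z : Set W) :
    cmul N (cmul N X Y) Z = cmul N X (cmul N Y Z) := by
  rw [cmul.eq_1 N X Y, cmul.eq_1 N Y Z, cmul_gam_left h, cmul_gam_right h, cmul, cmul,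
    Set.image2_assoc mul_assoc]

lemma cone_cmul (h : IsResFrame N lres rres) {X : Set W} (hX : Closed N X) :
    cmul N (cone N) X = X := by
  rw [cone, cmul_gam_left h, cmul, Set.image2_singleton_left]
  simpa [Closed] using hX

lemma cmul_cone (h : IsResFrame N lres rres) {X : Set W} (hX : Closed N X) :
    cmul N X (cone N) = X := by
  rw [cone, cmul_gam_right h, cmul, Set.image2_singleton_right]
  simpa [Closed] using hX

theorem dualResLat (h : IsResFrame N lres rres) : DualResLat N :=
  ⟨fun _ _ => closed_inter, fun _ _ => closed_gam _, fun _ _ => closed_gam _,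
    fun X _ => closed_sld h X, fun X _ => closed_srd h X, closed_gam _,
    fun _ _ => Set.inter_subset_left, fun _ _ => Set.inter_subset_right,
    fun _ _ _ => Set.subset_inter,
    fun _ _ => Set.subset_union_left.trans (subset_gam _),
    fun _ _ => Set.subset_union_right.trans (subset_gam _),
    fun _ _ _ hZ hX hY => (gam_subset_iff hZ).2 (Set.union_subset hX hY),
    fun X Y Z _ _ _ => cmul_assoc h X Y Z,
    fun _ => cone_cmul h, fun _ => cmul_cone h,
    fun _ _ _ _ _ hZ => cmul_subset_iff_sld hZ, fun _ _ _ _ _ hZ => cmul_subset_iff_srd hZ⟩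

lemma star_unfold (h : IsResFrame N lres rres) (X : Set W) :
    cjoin N (cone N) (cmul N X (cstar N X)) ⊆ cstar N X := by
  refine (gam_subset_iff (closed_gam _)).2 (Set.union_subset ?_ ?_)
  · exact (gam_subset_iff (closed_gam _)).2 (Set.singleton_subset_iff.2 (one_mem_cstar X))
  · rw [cstar, cmul_gam_right h, cmul_subset_iff (closed_gam _)]
    exact fun x hx y hy => subset_gam _ (mul_mem (subset_starSet X hx) hy)

lemma star_indl (h : IsResFrame N lres rres) {X Y : Set W} (hY : Closed N Y)
    (hXY : cmul N X Y ⊆ Y) : cmul N (cstar N X) Y ⊆ Y := by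
  rw [cmul_subset_iff hY] at hXY
  rw [cstar, cmul_gam_left h, cmul_subset_iff hY]
  intro x hx
  induction hx using Submonoid.closure_induction with
  | mem x hx => exact hXY x hx
  | one => simp
  | mul a b _ _ ha hb => exact fun y hy => by rw [mul_assoc]; exact ha _ (hb y hy)

lemma star_indr (h : IsResFrame N lres rres) {X Y : Set W} (hY : Closed N Y)
    (hXY : cmul N Y X ⊆ Y) : cmul N Y (cstar N X) ⊆ Y := by
  rw [cmul_subset_iff hY] at hXY
  rw [cstar, cmul_gam_right h, cmul_subset_iff hY]
  intro y hy x hx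
  induction hx using Submonoid.closure_induction generalizing y with
  | mem x hx => exact hXY y hy x hx
  | one => simpa
  | mul a b _ _ ha hb => rw [← mul_assoc]; exact hb _ (ha y hy)

lemma gpow_subset_cstar (h : IsResFrame N lres rres) (X : Set W) (n : ℕ) :
    gpow N X n ⊆ cstar N X := by
  induction n with
  | zero => exact (gam_subset_iff (closed_gam _)).2 (Set.singleton_subset_iff.2 (one_mem_cstar X))
  | succ n ih =>
    rw [gpow, cmul_subset_iff_srd (show Closed N (cstar N X) from closed_gam _)]
    refine ih.trans ((gam_subset_srd h (closed_gam _)).2 fun x hx y hy => ?_)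
    exact subset_gam _ (mul_mem hx (subset_starSet X hy))

/-- `gpow` multiplies by `X` on the right, so the induction peels off the last factor. -/
lemma exists_mem_gpow {X : Set W} {x : W} (hx : x ∈ starSet X) : ∃ n, x ∈ gpow N X n := by
  induction hx using Submonoid.closure_induction_right with
  | one => exact ⟨0, one_mem_cone⟩
  | mul_right a _ b hb ha =>
    obtain ⟨n, hn⟩ := ha
    exact ⟨n + 1, mul_mem_cmul hn hb⟩

lemma cstar_subset {X Y : Set W} (hY : Closed N Y) (hXY : ∀ n, gpow N X n ⊆ Y) :
    cstar N X ⊆ Y := by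
  refine (gam_subset_iff hY).2 fun x hx => ?_
  obtain ⟨n, hn⟩ := exists_mem_gpow (N := N) hx
  exact hXY n hn

/-- A `∘_γ`-product of a list of sets is contained in the closure of the set of products of choices
of one element from each factor: the intermediate closures do not matter. -/
lemma listCmul_subset (h : IsResFrame N lres rres) {L : List (Set W)} {Z : Set W}
    (hZ : Closed N Z) (hL : ∀ l, List.Forall₂ (· ∈ ·) l L → l.prod ∈ Z) :
    listCmul N L ⊆ Z := by
  induction L generalizing Z with
  | nil =>
    exact (gam_subset_iff hZ).2 (Set.singleton_subset_iff.2 (by simpa using hL [] .nil))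
  | cons X L ih =>
    rw [listCmul, cmul_subset_iff_sld hZ]
    refine ih (closed_sld h X hZ) fun l hl x hx => ?_
    simpa using hL (x :: l) (.cons hx hl)

lemma prod_mem_listCmul {ι : Type*} {v : ι → Set W} {x : ι → W} (hx : ∀ i, x i ∈ v i)
    (p : List ι) : (p.map x).prod ∈ listCmul N (p.map v) := by
  induction p with
  | nil => exact one_mem_cone
  | cons i p ih => simpa [listCmul] using mul_mem_cmul (N := N) (hx i) ih

end Frame

/-! ### The frame of a residuated lattice -/

section Algebra

/-- `(A, A, ≤, ·, 1)` is a residuated frame, with the residuals of `A` as nuclear functions. -/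
lemma isResFrame_le (A : Type*) [ResiduatedLattice A] :
    IsResFrame (W := A) (W' := A) (· ≤ ·) ResiduatedLattice.ld ResiduatedLattice.rd :=
  ⟨ResiduatedLattice.resl, fun x y z => ResiduatedLattice.resr x y z⟩

lemma dualSatAQ {A : Type*} [ResiduatedLattice A] {m : ℕ} {prems : List (List (Fin m))}
    (hA : AlgSatAQ A m prems) : DualSatAQ (W := A) (W' := A) (· ≤ ·) m prems := by
  intro v _ Z hZ hprem
  refine listCmul_subset (isResFrame_le A) hZ fun l hl => ?_
  -- The variables of the conclusion are distinct, so the list of chosen elements is a valuation.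
  obtain ⟨x, rfl, hx⟩ : ∃ x : Fin m → A, l = (List.finRange m).map x ∧ ∀ j, x j ∈ v j := by
    have hlen : l.length = m := by simpa using hl.length_eq
    subst hlen
    refine ⟨l.get, by simp [List.map_get_finRange], fun j => ?_⟩
    simpa using hl.get (i := j) (by simp) (by simp)
  refine (mem_closed_iff hZ).2 fun z hz => hA x z fun p hp => ?_
  exact hz _ (hprem p hp (prod_mem_listCmul hx p))

lemma mem_polL_singleton {A : Type*} [Preorder A] {a b : A} :
    b ∈ polL (· ≤ ·) ({a} : Set A) ↔ b ≤ a := by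
  simp [polL]

/-- In the frame given by an order, `γ(X) = a^◁` when `a` is the supremum of `X`. -/
lemma polL_eq_gam {A : Type*} [Preorder A] {a : A} {X : Set A} (h : IsLUB X a) :
    polL (· ≤ ·) ({a} : Set A) = gam (· ≤ ·) X := by
  ext b
  rw [mem_polL_singleton]
  exact ⟨fun hb z hz => hb.trans (h.2 fun _ hx => hz _ hx), fun hb => hb a fun _ hx => h.1 hx⟩

variable {A : Type*} [ResiduatedLattice A]

lemma mul_le_mul_of_residuated {a b c d : A} (hac : a ≤ c) (hbd : b ≤ d) : a * b ≤ c * d :=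
  ((ResiduatedLattice.resr a b _).2 (hac.trans ((ResiduatedLattice.resr c b _).1 le_rfl))).trans
    ((ResiduatedLattice.resl c b _).2 (hbd.trans ((ResiduatedLattice.resl c d _).1 le_rfl)))

lemma isLUB_sup_polL (a b : A) :
    IsLUB (polL (· ≤ ·) ({a} : Set A) ∪ polL (· ≤ ·) {b}) (a ⊔ b) := by
  constructor
  · rintro c (hc | hc)
    · exact (mem_polL_singleton.1 hc).trans le_sup_left
    · exact (mem_polL_singleton.1 hc).trans le_sup_right
  · exact fun c hc => sup_le (hc (.inl (mem_polL_singleton.2 le_rfl)))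
      (hc (.inr (mem_polL_singleton.2 le_rfl)))

lemma isLUB_mul_polL (a b : A) :
    IsLUB (Set.image2 (· * ·) (polL (· ≤ ·) ({a} : Set A)) (polL (· ≤ ·) {b})) (a * b) := by
  constructor
  · rintro _ ⟨c, hc, d, hd, rfl⟩
    exact mul_le_mul_of_residuated (mem_polL_singleton.1 hc) (mem_polL_singleton.1 hd)
  · exact fun c hc => hc (Set.mem_image2_of_mem (mem_polL_singleton.2 le_rfl)
      (mem_polL_singleton.2 le_rfl))

lemma polL_ld (a b : A) : polL (· ≤ ·) {ResiduatedLattice.ld a b} =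
    sld (polL (· ≤ ·) {a}) (polL (· ≤ ·) {b}) := by
  ext c
  simp only [mem_polL_singleton, sld, Set.mem_ofPred_eq, ← ResiduatedLattice.resl]
  exact ⟨fun h x hx => (mul_le_mul_of_residuated hx le_rfl).trans h, fun h => h a le_rfl⟩

lemma polL_rd (a b : A) : polL (· ≤ ·) {ResiduatedLattice.rd a b} =
    srd (polL (· ≤ ·) {a}) (polL (· ≤ ·) {b}) := by
  ext c
  simp only [mem_polL_singleton, srd, Set.mem_ofPred_eq, ← ResiduatedLattice.resr]
  exact ⟨fun h x hx => (mul_le_mul_of_residuated le_rfl hx).trans h, fun h => h b le_rfl⟩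

lemma isLUB_starSet_polL {A : Type*} [ActionLattice A] (hcont : StarContinuous A) (a : A) :
    IsLUB (starSet (polL (· ≤ ·) ({a} : Set A))) (ActionLattice.astar a) := by
  constructor
  · -- Each element of the generated submonoid is below some power of `a`.
    intro x hx
    suffices h : ∃ n : ℕ, x ≤ a ^ n by
      obtain ⟨n, hn⟩ := h
      exact hn.trans ((hcont a).1 ⟨n, rfl⟩)
    induction hx using Submonoid.closure_induction_right with
    | one => exact ⟨0, by simp⟩
    | mul_right c _ b hb hc =>
      obtain ⟨n, hn⟩ := hc
      exact ⟨n + 1, by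
        rw [pow_succ]; exact mul_le_mul_of_residuated hn (mem_polL_singleton.1 hb)⟩
  · refine fun z hz => (hcont a).2 ?_
    rintro _ ⟨n, rfl⟩
    exact hz (pow_mem (subset_starSet _ (mem_polL_singleton.2 le_rfl)) n)

end Algebra

end ResFrames

/-- let `A` be a `*`-continuous action lattice satisfying a set
`Q` of analytic quasiequations, and let `W_A = (A, A, ≤, ·, 1)` be the
associated residuated frame (with `N` given by `≤`). Then the dual algebra
`(W_A)⁺` (the MacNeille completion of `A`) is a `*`-continuous action lattice
satisfying every quasiequation in `Q`, and `f : a ↦ a^◁ = {b | b ≤ a}` is an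
injective homomorphism from `A` into `(W_A)⁺` preserving
`∧, ∨, ·, \, /, *, 0, 1`. Hence every class of `*`-continuous action lattices
axiomatized by analytic quasiequations is closed under MacNeille
completions. -/
theorem statement10 (A : Type*) [ActionLattice A] (hcont : StarContinuous A)
    (Q : Set AnQE) (hQ : ∀ q ∈ Q, AlgSatAQ A q.1 q.2) :
    -- `N` is the order of `A`
    (fun N : A → A → Prop =>
      -- the dual algebra is a residuated lattice ...
      DualResLat N ∧
      -- ... with least element `0^◁` ...
      Closed N (polL N {ActionLattice.azero}) ∧
      (∀ X : Set A, Closed N X → polL N {ActionLattice.azero} ⊆ X) ∧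
      -- ... satisfying the action lattice axioms for `*_γ` ...
      (∀ X : Set A, Closed N (cstar N X)) ∧
      (∀ X : Set A, Closed N X →
        cjoin N (cone N) (cmul N X (cstar N X)) ⊆ cstar N X) ∧
      (∀ X Y : Set A, Closed N X → Closed N Y →
        cmul N X Y ⊆ Y → cmul N (cstar N X) Y ⊆ Y) ∧
      (∀ X Y : Set A, Closed N X → Closed N Y →
        cmul N Y X ⊆ Y → cmul N Y (cstar N X) ⊆ Y) ∧
      -- ... which is `*`-continuous ...
      (∀ X : Set A, Closed N X → ∀ n : ℕ, gpow N X n ⊆ cstar N X) ∧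
      (∀ X Y : Set A, Closed N X → Closed N Y →
        (∀ n : ℕ, gpow N X n ⊆ Y) → cstar N X ⊆ Y) ∧
      -- ... and satisfies every quasiequation in `Q`;
      (∀ q ∈ Q, DualSatAQ N q.1 q.2) ∧
      -- moreover `f : a ↦ a^◁` is an injective homomorphism
      Function.Injective (fun a : A => polL N {a}) ∧
      (∀ a : A, polL N {a} = {b : A | b ≤ a}) ∧
      (∀ a b : A, polL N {a ⊓ b} = polL N {a} ∩ polL N {b}) ∧
      (∀ a b : A, polL N {a ⊔ b} = cjoin N (polL N {a}) (polL N {b})) ∧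
      (∀ a b : A, polL N {a * b} = cmul N (polL N {a}) (polL N {b})) ∧
      (∀ a b : A, polL N {ResiduatedLattice.ld a b} =
        sld (polL N {a}) (polL N {b})) ∧
      (∀ a b : A, polL N {ResiduatedLattice.rd a b} =
        srd (polL N {a}) (polL N {b})) ∧
      (∀ a : A, polL N {ActionLattice.astar a} = cstar N (polL N {a})) ∧
      (polL N {(1 : A)} = cone N))
    (· ≤ ·) := by
  have hF := isResFrame_le A
  refine ⟨dualResLat hF, closed_polL _, ?_, fun _ => closed_gam _, fun X _ => star_unfold hF X,
    fun _ _ _ => star_indl hF, fun _ _ _ => star_indr hF, fun X _ => gpow_subset_cstar hF X,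
    fun _ _ _ => cstar_subset, fun q hq => dualSatAQ (hQ q hq), ?_,
    fun _ => Set.ext fun _ => mem_polL_singleton,
    fun a b => Set.ext fun c => ?_, fun a b => polL_eq_gam (isLUB_sup_polL a b),
    fun a b => polL_eq_gam (isLUB_mul_polL a b), polL_ld, polL_rd,
    fun a => polL_eq_gam (isLUB_starSet_polL hcont a), polL_eq_gam isLUB_singleton⟩
  · intro X hX b hb
    exact (mem_closed_iff hX).2 fun z _ =>
      (mem_polL_singleton.1 hb).trans (ActionLattice.zero_le z)
  · intro a b hab
    have key : ∀ c : A, c ≤ a ↔ c ≤ b := fun c => by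
      rw [← mem_polL_singleton, ← mem_polL_singleton]
      exact Set.ext_iff.1 hab c
    exact le_antisymm ((key a).1 le_rfl) ((key b).2 le_rfl)
  · rw [Set.mem_inter_iff, mem_polL_singleton, mem_polL_singleton, mem_polL_singleton, le_inf_iff]
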